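/- Fix i with 1 ≤ i ≤ n−1. Let v = s_1 ∘ s_2 ∘ ⋯ ∘ s_n (rightmost factor applied first), let u be an element of the subgroup of the orthogonal group of ℝ^n generated by {s_j : j ≠ 1} with u(α_j) a negative root for every j ≠ 1, and let u_i be an element of the subgroup generated by {s_j : j ∉ {1, i}} with u_i(α_j) a negative root for every j ∉ {1, i} (u and u_i are the longest elements of the corresponding parabolic Weyl groups). Set w_i = u_i ∘ u ∘ v. Then w_i⁻¹(α_i) is a negative root, and w_i⁻¹(α_j) is a positive root for every 1 ≤ j ≤ n with j ≠ i. -/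

import Mathlib

/-!
Every element of the group generated by the `sⱼ` with `j ∉ {1, i}` is a signed permutation of the
standard basis that fixes `e₁`, permutes `{e₂, …, eᵢ}` without signs and permutes
`{eᵢ₊₁, …, eₙ}` up to signs (`IsBlock.of_mem_closure`). The linear functional `rhoC` with
`e_k ↦ 2(n - k) + 1` takes the value `2` on each simple root, so it is positive on positive roots.
If all simple roots of the parabolic subsystem become negative, this functional shows that the
permutation of `{2, …, i}` is strictly decreasing, that all signs on `{i + 1, …, n}` are `-1`, and
that the permutation there is strictly increasing. Hence the longest element is
`e_k ↦ e_{i+2-k}` for `2 ≤ k ≤ i` and `e_k ↦ -e_k` for `k > i` (`longest_apply`); the element `u`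
is the instance `i = 1` of this description.

Since `v` sends `e_k ↦ e_{k+1}` for `k < n` and `e_n ↦ -e_1`, the product `w = u' u v` is
`e_k ↦ -e_{i+1-k}` for `k < i`, `e_k ↦ e_{k+1}` for `i ≤ k < n`, and `e_n ↦ -e_1`. The preimage of
each simple root under `w` can then be written down explicitly.
-/

open scoped InnerProductSpace

private lemma sRefl_invol {V : Type*} [NormedAddCommGroup V] [InnerProductSpace ℝ V]
    (b x : V) :
    (x - (2 * ⟪x, b⟫_ℝ / ⟪b, b⟫_ℝ) • b) -
      (2 * ⟪x - (2 * ⟪x, b⟫_ℝ / ⟪b, b⟫_ℝ) • b, b⟫_ℝ / ⟪b, b⟫_ℝ) • b = x := by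
  by_cases hb : b = 0
  · simp [hb]
  · have h : ⟪b, b⟫_ℝ ≠ 0 := fun h => hb (inner_self_eq_zero.mp h)
    have key : 2 * ⟪x - (2 * ⟪x, b⟫_ℝ / ⟪b, b⟫_ℝ) • b, b⟫_ℝ / ⟪b, b⟫_ℝ
        = -(2 * ⟪x, b⟫_ℝ / ⟪b, b⟫_ℝ) := by
      rw [inner_sub_left, real_inner_smul_left]
      field_simp
      ring
    rw [key, neg_smul, sub_neg_eq_add, sub_add_cancel]

/-- The reflection `s_b : x ↦ x - (2⟪x,b⟫/⟪b,b⟫) • b`, as a permutation of `V`. -/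
noncomputable def sRefl {V : Type*} [NormedAddCommGroup V] [InnerProductSpace ℝ V]
    (b : V) : Equiv.Perm V where
  toFun x := x - (2 * ⟪x, b⟫_ℝ / ⟪b, b⟫_ℝ) • b
  invFun x := x - (2 * ⟪x, b⟫_ℝ / ⟪b, b⟫_ℝ) • b
  left_inv x := sRefl_invol b x
  right_inv x := sRefl_invol b x

/-- `E n i` is the `i`-th standard basis vector of `ℝ^n` (for indices `1 ≤ i ≤ n`). -/
noncomputable def E (n i : ℕ) : EuclideanSpace ℝ (Fin n) :=
  if h : 1 ≤ i ∧ i ≤ n then EuclideanSpace.single (⟨i - 1, by omega⟩ : Fin n) 1 else 0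

/-- The simple roots of type `Cₙ` (indexed by `1 ≤ i ≤ n`):
`αᵢ = eᵢ - eᵢ₊₁` for `i ≤ n - 1` and `αₙ = 2eₙ`. -/
noncomputable def alphaC (n i : ℕ) : EuclideanSpace ℝ (Fin n) :=
  if i = n then (2 : ℝ) • E n n else E n i - E n (i + 1)

/-- The roots of type `Cₙ`: `±eᵢ ± eⱼ` (`1 ≤ i < j ≤ n`) and `±2eᵢ` (`1 ≤ i ≤ n`). -/
def RootC (n : ℕ) : Set (EuclideanSpace ℝ (Fin n)) :=
  {x | (∃ i j, 1 ≤ i ∧ i < j ∧ j ≤ n ∧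
      (x = E n i + E n j ∨ x = -(E n i + E n j) ∨ x = E n i - E n j ∨ x = E n j - E n i)) ∨
    (∃ i, 1 ≤ i ∧ i ≤ n ∧ (x = (2 : ℝ) • E n i ∨ x = -((2 : ℝ) • E n i)))}

/-- A positive root of type `Cₙ`: a root which is a nonnegative integer combination of
the simple roots. -/
def IsPosC (n : ℕ) (x : EuclideanSpace ℝ (Fin n)) : Prop :=
  x ∈ RootC n ∧ ∃ c : ℕ → ℕ, x = ∑ i ∈ Finset.Icc 1 n, (c i : ℝ) • alphaC n i

/-- A negative root of type `Cₙ`: the negative of a positive root. -/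
def IsNegC (n : ℕ) (x : EuclideanSpace ℝ (Fin n)) : Prop :=
  IsPosC n (-x)

/-- The simple reflections `sᵢ = s_{αᵢ}` of type `Cₙ`. -/
noncomputable def sC (n i : ℕ) : Equiv.Perm (EuclideanSpace ℝ (Fin n)) :=
  sRefl (alphaC n i)

/-- `v = s₁ ∘ s₂ ∘ ⋯ ∘ sₙ` (rightmost factor applied first);
recall that in `Equiv.Perm` the product `f * g` is the composition `f ∘ g`. -/
noncomputable def vC (n : ℕ) : Equiv.Perm (EuclideanSpace ℝ (Fin n)) :=
  ((List.range n).map fun k => sC n (k + 1)).prod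

/-! ### Simple reflections on the standard basis -/

lemma inner_E (n a b : ℕ) (ha1 : 1 ≤ a) (ha : a ≤ n) (hb1 : 1 ≤ b) (hb : b ≤ n) :
    ⟪E n a, E n b⟫_ℝ = if a = b then 1 else 0 := by
  rw [E, E, dif_pos ⟨ha1, ha⟩, dif_pos ⟨hb1, hb⟩]
  simp only [EuclideanSpace.inner_single_left, PiLp.single_apply, map_one, one_mul, Fin.mk.injEq]
  congr 1
  simp only [eq_iff_iff]
  omega

lemma sC_linear (n j : ℕ) : IsLinearMap ℝ (sC n j) := by
  constructor
  · intro x y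
    change (x + y) - (2 * ⟪x + y, alphaC n j⟫_ℝ / _) • alphaC n j =
      (x - (2 * ⟪x, alphaC n j⟫_ℝ / _) • alphaC n j) +
        (y - (2 * ⟪y, alphaC n j⟫_ℝ / _) • alphaC n j)
    rw [inner_add_left, mul_add, add_div]
    module
  · intro c x
    change (c • x) - (2 * ⟪c • x, alphaC n j⟫_ℝ / _) • alphaC n j =
      c • (x - (2 * ⟪x, alphaC n j⟫_ℝ / _) • alphaC n j)
    rw [real_inner_smul_left, mul_left_comm, mul_div_assoc]
    module

lemma sC_inv (n j : ℕ) : (sC n j)⁻¹ = sC n j := rfl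

lemma sC_apply (n j : ℕ) (x : EuclideanSpace ℝ (Fin n)) :
    sC n j x = x - (2 * ⟪x, alphaC n j⟫_ℝ / ⟪alphaC n j, alphaC n j⟫_ℝ) • alphaC n j := rfl

lemma sC_last (n k : ℕ) (hk1 : 1 ≤ k) (hk : k ≤ n) :
    sC n n (E n k) = if k = n then -E n n else E n k := by
  rw [sC_apply, alphaC, if_pos rfl]
  simp only [real_inner_smul_left, real_inner_smul_right]
  rw [inner_E n k n hk1 hk (by omega) le_rfl, inner_E n n n (by omega) le_rfl (by omega) le_rfl]
  rw [if_pos (rfl : n = n)]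
  split_ifs with h
  · subst h
    norm_num
    module
  · simp

lemma sC_lt (n j k : ℕ) (hj1 : 1 ≤ j) (hj : j < n) (hk1 : 1 ≤ k) (hk : k ≤ n) :
    sC n j (E n k) = if k = j then E n (j + 1) else if k = j + 1 then E n j else E n k := by
  rw [sC_apply, alphaC, if_neg (by omega)]
  simp only [inner_sub_left, inner_sub_right]
  rw [inner_E n k j hk1 hk hj1 (by omega), inner_E n k (j+1) hk1 hk (by omega) (by omega),
    inner_E n j j hj1 (by omega) hj1 (by omega),
    inner_E n j (j+1) hj1 (by omega) (by omega) (by omega),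
    inner_E n (j+1) j (by omega) (by omega) hj1 (by omega),
    inner_E n (j+1) (j+1) (by omega) (by omega) (by omega) (by omega)]
  split_ifs <;> first | omega | skip
  · subst_vars
    norm_num
  · subst_vars
    norm_num
  · simp

/-! ### Positivity of roots -/

/-- The linear functional with `e_k ↦ 2(n - k) + 1`; its value is `2` on every simple root. -/
noncomputable def rhoC (n : ℕ) : EuclideanSpace ℝ (Fin n) →ₗ[ℝ] ℝ :=
  (innerₛₗ ℝ) (∑ k ∈ Finset.Icc 1 n, (2 * ((n : ℝ) - k) + 1) • E n k)

lemma rhoC_E (n k : ℕ) (hk1 : 1 ≤ k) (hk : k ≤ n) :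
    rhoC n (E n k) = 2 * ((n : ℝ) - k) + 1 := by
  simp only [rhoC, innerₛₗ_apply_apply, sum_inner, real_inner_smul_left]
  rw [Finset.sum_eq_single_of_mem k (Finset.mem_Icc.2 ⟨hk1, hk⟩)]
  · rw [inner_E n k k hk1 hk hk1 hk]
    simp
  · intro b hb hbk
    rw [Finset.mem_Icc] at hb
    rw [inner_E n b k hb.1 hb.2 hk1 hk, if_neg hbk, mul_zero]

lemma rhoC_alpha (n j : ℕ) (hj1 : 1 ≤ j) (hj : j ≤ n) : rhoC n (alphaC n j) = 2 := by
  rw [alphaC]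
  split_ifs with h
  · rw [map_smul, rhoC_E n n (by omega) le_rfl]
    simp
  · rw [map_sub, rhoC_E n j hj1 hj, rhoC_E n (j+1) (by omega) (by omega)]
    push_cast
    ring

lemma rhoC_pos {n : ℕ} {x : EuclideanSpace ℝ (Fin n)} (hx : IsPosC n x) : 0 < rhoC n x := by
  obtain ⟨hr, c, hc⟩ := hx
  have h0 : 0 ≤ rhoC n x := by
    rw [hc, map_sum]
    refine Finset.sum_nonneg fun j hj => ?_
    rw [Finset.mem_Icc] at hj
    rw [map_smul, rhoC_alpha n j hj.1 hj.2]
    positivity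
  refine lt_of_le_of_ne h0 (Ne.symm ?_)
  -- the functional vanishes on no root
  rcases hr with ⟨a, b, ha, hab, hb, h⟩ | ⟨a, ha, hb, h⟩
  · have hab' : (a : ℝ) < b := by exact_mod_cast hab
    have hb' : (b : ℝ) ≤ n := by exact_mod_cast hb
    have ea := rhoC_E n a ha (by omega)
    have eb := rhoC_E n b (by omega) hb
    rcases h with h | h | h | h <;> rw [h] <;> simp only [map_neg, map_add, map_sub, ea, eb] <;>
      intro h' <;> linarith
  · have hb' : (a : ℝ) ≤ n := by exact_mod_cast hb
    have ea := rhoC_E n a ha (by omega)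
    rcases h with h | h <;> rw [h] <;> simp only [map_neg, map_smul, ea, smul_eq_mul] <;>
      intro h' <;> linarith

lemma rhoC_neg {n : ℕ} {x : EuclideanSpace ℝ (Fin n)} (hx : IsNegC n x) : rhoC n x < 0 := by
  have := rhoC_pos hx
  rw [map_neg] at this
  linarith

/-- `x` is a nonnegative integer combination of the simple roots. -/
def NonnegComb (n : ℕ) (x : EuclideanSpace ℝ (Fin n)) : Prop :=
  ∃ c : ℕ → ℕ, x = ∑ i ∈ Finset.Icc 1 n, (c i : ℝ) • alphaC n i

lemma NonnegComb.add {n : ℕ} {x y : EuclideanSpace ℝ (Fin n)} (hx : NonnegComb n x)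
    (hy : NonnegComb n y) : NonnegComb n (x + y) := by
  obtain ⟨c, rfl⟩ := hx
  obtain ⟨d, rfl⟩ := hy
  refine ⟨fun i => c i + d i, ?_⟩
  rw [← Finset.sum_add_distrib]
  refine Finset.sum_congr rfl fun i _ => ?_
  push_cast
  rw [add_smul]

lemma NonnegComb.zero (n : ℕ) : NonnegComb n 0 := ⟨fun _ => 0, by simp⟩

lemma NonnegComb.alpha (n j : ℕ) (hj1 : 1 ≤ j) (hj : j ≤ n) : NonnegComb n (alphaC n j) := by
  refine ⟨fun i => if i = j then 1 else 0, ?_⟩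
  rw [Finset.sum_eq_single_of_mem j (Finset.mem_Icc.2 ⟨hj1, hj⟩)]
  · simp
  · intro b _ hb
    simp [hb]

lemma NonnegComb.sub (n a b : ℕ) (ha : 1 ≤ a) (hab : a ≤ b) (hb : b ≤ n) :
    NonnegComb n (E n a - E n b) := by
  induction b, hab using Nat.le_induction with
  | base => rw [sub_self]; exact .zero n
  | succ b hab ih =>
    have h := (ih (by omega)).add (.alpha n b (by omega) (by omega))
    rw [alphaC, if_neg (by omega)] at h
    simpa using h

lemma NonnegComb.add_E (n a b : ℕ) (ha : 1 ≤ a) (han : a ≤ n) (hb : 1 ≤ b) (hbn : b ≤ n) :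
    NonnegComb n (E n a + E n b) := by
  have h := ((NonnegComb.sub n a n ha han le_rfl).add (.sub n b n hb hbn le_rfl)).add
    (.alpha n n (by omega) le_rfl)
  rw [alphaC, if_pos rfl] at h
  convert h using 1
  module

lemma isPosC_sub (n a b : ℕ) (ha : 1 ≤ a) (hab : a < b) (hb : b ≤ n) :
    IsPosC n (E n a - E n b) :=
  ⟨.inl ⟨a, b, ha, hab, hb, by simp⟩, NonnegComb.sub n a b ha hab.le hb⟩

lemma isPosC_add (n a b : ℕ) (ha : 1 ≤ a) (hab : a < b) (hb : b ≤ n) :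
    IsPosC n (E n a + E n b) :=
  ⟨.inl ⟨a, b, ha, hab, hb, by simp⟩, NonnegComb.add_E n a b ha (by omega) (by omega) hb⟩

lemma isPosC_two (n a : ℕ) (ha : 1 ≤ a) (hb : a ≤ n) : IsPosC n ((2 : ℝ) • E n a) :=
  ⟨.inr ⟨a, ha, hb, by simp⟩, by
    have h := NonnegComb.add_E n a a ha hb ha hb
    rwa [← two_smul ℝ] at h⟩

/-! ### Longest elements of the parabolic subgroups -/

/-- `g` is a linear signed permutation of the standard basis which fixes `e₁`, permutes
`e₂, …, eᵢ` without signs, and permutes `eᵢ₊₁, …, eₙ` up to signs. (Injectivity on indices is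
automatic and not recorded.) -/
structure IsBlock (n i : ℕ) (g : Equiv.Perm (EuclideanSpace ℝ (Fin n))) : Prop where
  lin : IsLinearMap ℝ g
  one : g (E n 1) = E n 1
  mid : ∀ k, 2 ≤ k → k ≤ i → ∃ l, 2 ≤ l ∧ l ≤ i ∧ g (E n k) = E n l
  top : ∀ k, i < k → k ≤ n → ∃ l, i < l ∧ l ≤ n ∧ (g (E n k) = E n l ∨ g (E n k) = -E n l)

lemma IsBlock.mul {n i : ℕ} {g h : Equiv.Perm (EuclideanSpace ℝ (Fin n))} (hg : IsBlock n i g)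
    (hh : IsBlock n i h) : IsBlock n i (g * h) where
  lin := ⟨fun x y => by simp [hh.lin.map_add, hg.lin.map_add],
    fun c x => by simp [hh.lin.map_smul, hg.lin.map_smul]⟩
  one := by simp [hh.one, hg.one]
  mid k h2 hk := by
    obtain ⟨l, hl2, hl, e⟩ := hh.mid k h2 hk
    obtain ⟨m, hm2, hm, e'⟩ := hg.mid l hl2 hl
    exact ⟨m, hm2, hm, by simp [e, e']⟩
  top k h2 hk := by
    obtain ⟨l, hl2, hl, e⟩ := hh.top k h2 hk
    obtain ⟨m, hm2, hm, e'⟩ := hg.top l hl2 hl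
    refine ⟨m, hm2, hm, ?_⟩
    rcases e with e | e <;> rcases e' with e' | e' <;> simp [e, e', hg.lin.map_neg]

lemma IsBlock.sC {n i j : ℕ} (hi : 1 ≤ i) (hin : i < n) (hj1 : 1 ≤ j) (hj : j ≤ n) (h1 : j ≠ 1)
    (h2 : j ≠ i) : IsBlock n i (sC n j) where
  lin := sC_linear n j
  one := by
    rcases hj.lt_or_eq with h | rfl
    · rw [sC_lt n j 1 hj1 h le_rfl (by omega), if_neg (by omega), if_neg (by omega)]
    · rw [sC_last j 1 le_rfl hj1, if_neg (by omega)]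
  mid k hk2 hk := by
    rcases hj.lt_or_eq with h | rfl
    · rw [sC_lt n j k hj1 h (by omega) (by omega)]
      split_ifs
      · exact ⟨j + 1, by omega, by omega, rfl⟩
      · exact ⟨j, by omega, by omega, rfl⟩
      · exact ⟨k, hk2, hk, rfl⟩
    · rw [sC_last j k (by omega) (by omega), if_neg (by omega)]
      exact ⟨k, hk2, hk, rfl⟩
  top k hk2 hk := by
    rcases hj.lt_or_eq with h | rfl
    · rw [sC_lt n j k hj1 h (by omega) (by omega)]
      split_ifs
      · exact ⟨j + 1, by omega, by omega, .inl rfl⟩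
      · exact ⟨j, by omega, by omega, .inl rfl⟩
      · exact ⟨k, hk2, hk, .inl rfl⟩
    · rw [sC_last j k (by omega) (by omega)]
      split_ifs
      · exact ⟨j, by omega, le_rfl, .inr rfl⟩
      · exact ⟨k, hk2, hk, .inl rfl⟩

lemma IsBlock.of_mem_closure {n i : ℕ} (hi : 1 ≤ i) (hin : i < n)
    {g : Equiv.Perm (EuclideanSpace ℝ (Fin n))}
    (hg : g ∈ Subgroup.closure {g | ∃ j, 1 ≤ j ∧ j ≤ n ∧ j ≠ 1 ∧ j ≠ i ∧ g = _root_.sC n j}) :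
    IsBlock n i g := by
  induction hg using Subgroup.closure_induction_left with
  | one =>
    exact ⟨⟨fun _ _ => rfl, fun _ _ => rfl⟩, rfl, fun k h h' => ⟨k, h, h', rfl⟩,
      fun k h h' => ⟨k, h, h', .inl rfl⟩⟩
  | mul_left x hx y _ ih =>
    obtain ⟨j, hj1, hj, h1, h2, rfl⟩ := hx
    exact (IsBlock.sC hi hin hj1 hj h1 h2).mul ih
  | inv_mul_cancel x hx y _ ih =>
    obtain ⟨j, hj1, hj, h1, h2, rfl⟩ := hx
    rw [sC_inv]
    exact (IsBlock.sC hi hin hj1 hj h1 h2).mul ih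

/-- A strictly increasing self-map of an integer interval is the identity. -/
lemma eq_self_of_strictMono_Icc (a b : ℕ) (f : ℕ → ℕ)
    (hf : ∀ k, a ≤ k → k ≤ b → a ≤ f k ∧ f k ≤ b)
    (hm : ∀ k, a ≤ k → k < b → f k < f (k + 1)) (k : ℕ) (hak : a ≤ k) (hkb : k ≤ b) :
    f k = k := by
  have h1 : ∀ d, a + d ≤ b → a + d ≤ f (a + d) := by
    intro d
    induction d with
    | zero => intro h; exact (hf a le_rfl h).1
    | succ d ih =>
      intro h
      have := ih (by omega)
      have := hm (a + d) (by omega) (by omega)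
      rw [← add_assoc]
      omega
  have h2 : ∀ d, a + d ≤ b → f (b - d) ≤ b - d := by
    intro d
    induction d with
    | zero => intro h; exact (hf b (by omega) le_rfl).2
    | succ d ih =>
      intro h
      have := ih (by omega)
      have h' := hm (b - (d + 1)) (by omega) (by omega)
      rw [show b - (d + 1) + 1 = b - d by omega] at h'
      omega
  have e1 := h1 (k - a) (by omega)
  have e2 := h2 (b - k) (by omega)
  rw [show a + (k - a) = k by omega] at e1
  rw [show b - (b - k) = k by omega] at e2
  omega

/-- The longest element of the parabolic subgroup generated by the `sⱼ` with `j ∉ {1, i}`: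
the description covers `i = 1` as well, where the middle block is empty. -/
lemma longest_apply {n i : ℕ} (hi : 1 ≤ i) (hin : i < n)
    {g : Equiv.Perm (EuclideanSpace ℝ (Fin n))} (hg : IsBlock n i g)
    (hneg : ∀ j, 1 ≤ j → j ≤ n → j ≠ 1 → j ≠ i → IsNegC n (g (alphaC n j))) :
    (∀ k, 2 ≤ k → k ≤ i → g (E n k) = E n (i + 2 - k)) ∧
    (∀ k, i < k → k ≤ n → g (E n k) = -E n k) := by
  have hstep : ∀ j, 2 ≤ j → j < n → j ≠ i →
      rhoC n (g (E n j)) < rhoC n (g (E n (j + 1))) := by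
    intro j h2 hj hji
    have := rhoC_neg (hneg j (by omega) hj.le (by omega) hji)
    rw [alphaC, if_neg (by omega), hg.lin.map_sub, map_sub] at this
    linarith
  have hlast : rhoC n (g (E n n)) < 0 := by
    have := rhoC_neg (hneg n (by omega) le_rfl (by omega) (by omega))
    rw [alphaC, if_pos rfl, hg.lin.map_smul, map_smul, smul_eq_mul] at this
    linarith
  constructor
  · have hmid := hg.mid
    choose! f hf2 hfi hf using hmid
    -- reversing the block turns the decreasing permutation `f` into an increasing self-map
    have key := eq_self_of_strictMono_Icc 2 i (fun k => f (i + 2 - k))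
      (fun k h2 hk => ⟨hf2 _ (by omega) (by omega), hfi _ (by omega) (by omega)⟩) (by
        intro k h2 hk
        have hs := hstep (i + 2 - (k + 1)) (by omega) (by omega) (by omega)
        rw [show i + 2 - (k + 1) + 1 = i + 2 - k by omega] at hs
        have a1 := hf2 (i + 2 - (k + 1)) (by omega) (by omega)
        have a2 := hfi (i + 2 - (k + 1)) (by omega) (by omega)
        have a3 := hf2 (i + 2 - k) (by omega) (by omega)
        have a4 := hfi (i + 2 - k) (by omega) (by omega)
        rw [hf _ (by omega) (by omega), hf _ (by omega) (by omega),
          rhoC_E n _ (by omega) (by omega), rhoC_E n _ (by omega) (by omega)] at hs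
        have : (f (i + 2 - k) : ℝ) < f (i + 2 - (k + 1)) := by linarith
        exact_mod_cast this)
    intro k h2 hk
    have := key (i + 2 - k) (by omega) (by omega)
    simp only [show i + 2 - (i + 2 - k) = k by omega] at this
    rw [hf k h2 hk, this]
  · have hall : ∀ d, i + d < n → rhoC n (g (E n (n - d))) < 0 := by
      intro d
      induction d with
      | zero => intro _; exact hlast
      | succ d ih =>
        intro h
        have hs := hstep (n - (d + 1)) (by omega) (by omega) (by omega)
        rw [show n - (d + 1) + 1 = n - d by omega] at hs
        exact hs.trans (ih (by omega))
    have htop : ∀ k, i < k → k ≤ n → ∃ l, i < l ∧ l ≤ n ∧ g (E n k) = -E n l := by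
      intro k hik hk
      obtain ⟨l, hl1, hl, h | h⟩ := hg.top k hik hk
      · have := hall (n - k) (by omega)
        rw [show n - (n - k) = k by omega, h, rhoC_E n l (by omega) hl] at this
        have hl' : (l : ℝ) ≤ n := by exact_mod_cast hl
        linarith
      · exact ⟨l, hl1, hl, h⟩
    choose! f hf1 hfn hf using htop
    have key := eq_self_of_strictMono_Icc (i + 1) n f
      (fun k h2 hk => ⟨hf1 _ h2 hk, hfn _ h2 hk⟩) (by
        intro k h2 hk
        have hs := hstep k (by omega) hk (by omega)
        have a1 := hf1 k (by omega) (by omega)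
        have a2 := hfn k (by omega) (by omega)
        have a3 := hf1 (k + 1) (by omega) (by omega)
        have a4 := hfn (k + 1) (by omega) (by omega)
        rw [hf _ (by omega) (by omega), hf _ (by omega) (by omega), map_neg, map_neg,
          rhoC_E n _ (by omega) (by omega), rhoC_E n _ (by omega) (by omega)] at hs
        have : (f k : ℝ) < f (k + 1) := by linarith
        exact_mod_cast this)
    intro k hik hk
    rw [hf k hik hk, key k hik hk]

/-! ### The element `v` -/

lemma list_prod_linear (n m : ℕ) :
    IsLinearMap ℝ ((List.range m).map fun k => sC n (k + 1)).prod := by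
  induction m with
  | zero => exact ⟨fun _ _ => rfl, fun _ _ => rfl⟩
  | succ m ih =>
    rw [List.range_succ, List.map_append, List.prod_append]
    have h := sC_linear n (m + 1)
    exact ⟨fun x y => by simp [ih.map_add, h.map_add],
      fun c x => by simp [ih.map_smul, h.map_smul]⟩

/-- The partial product `s₁ ∘ ⋯ ∘ s_m`, `m < n`, is the cycle `e₁ ↦ e₂ ↦ ⋯ ↦ e_{m+1} ↦ e₁`. -/
lemma list_prod_apply (n m : ℕ) (hm : m < n) (k : ℕ) (hk1 : 1 ≤ k) (hk : k ≤ n) :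
    ((List.range m).map fun k => sC n (k + 1)).prod (E n k) =
      if k ≤ m then E n (k + 1) else if k = m + 1 then E n 1 else E n k := by
  induction m generalizing k with
  | zero =>
    simp only [List.range_zero, List.map_nil, List.prod_nil, Equiv.Perm.coe_one, id_eq]
    split_ifs with h1 h2
    · omega
    · rw [h2]
    · rfl
  | succ m ih =>
    rw [List.range_succ, List.map_append, List.prod_append]
    simp only [List.map_cons, List.map_nil, List.prod_cons, List.prod_nil, mul_one,
      Equiv.Perm.coe_mul, Function.comp_apply]
    rw [sC_lt n (m + 1) k (by omega) hm hk1 hk]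
    have hm' : m < n := by omega
    by_cases c1 : k = m + 1
    · rw [if_pos c1, ih hm' _ (by omega) (by omega), if_neg (by omega), if_neg (by omega),
        if_pos (by omega), c1]
    · rw [if_neg c1]
      by_cases c2 : k = m + 1 + 1
      · rw [if_pos c2, ih hm' _ (by omega) (by omega), if_neg (by omega), if_pos rfl,
          if_neg (by omega), if_pos c2]
      · rw [if_neg c2, ih hm' _ hk1 hk, if_neg c1, if_neg c2]
        congr 1
        simp only [eq_iff_iff]
        omega

lemma vC_apply (n k : ℕ) (hn : 1 ≤ n) (hk1 : 1 ≤ k) (hk : k ≤ n) :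
    vC n (E n k) = if k = n then -E n 1 else E n (k + 1) := by
  obtain ⟨m, rfl⟩ : ∃ m, n = m + 1 := ⟨n - 1, by omega⟩
  rw [vC, List.range_succ, List.map_append, List.prod_append]
  simp only [List.map_cons, List.map_nil, List.prod_cons, List.prod_nil, mul_one,
    Equiv.Perm.coe_mul, Function.comp_apply]
  rw [sC_last _ k hk1 hk]
  split_ifs with h
  · rw [(list_prod_linear _ _).map_neg, list_prod_apply _ m (by omega) _ (by omega) le_rfl,
      if_neg (by omega), if_pos rfl]
  · rw [list_prod_apply _ m (by omega) _ hk1 hk, if_pos (by omega)]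

/-! ### The element `w` -/

/-- Type `Cₙ` (`n ≥ 3`), `1 ≤ i ≤ n - 1`: let `v = s₁ ∘ ⋯ ∘ sₙ`, let `u` be the longest
element of the parabolic Weyl group generated by `{sⱼ : j ≠ 1}` and let `u'` be the longest
element of the parabolic Weyl group generated by `{sⱼ : j ∉ {1, i}}`.  Then, for
`wᵢ = u' ∘ u ∘ v`, `wᵢ⁻¹(αᵢ)` is a negative root and `wᵢ⁻¹(αⱼ)` is a positive root for
every `j ≠ i`. -/
theorem stmt_14 (n : ℕ) (hn : 3 ≤ n) (i : ℕ) (hi1 : 1 ≤ i) (hi2 : i ≤ n - 1)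
    (u : Equiv.Perm (EuclideanSpace ℝ (Fin n)))
    (hu : u ∈ Subgroup.closure {g | ∃ j, 1 ≤ j ∧ j ≤ n ∧ j ≠ 1 ∧ g = sC n j})
    (hneg : ∀ j, 1 ≤ j → j ≤ n → j ≠ 1 → IsNegC n (u (alphaC n j)))
    (u' : Equiv.Perm (EuclideanSpace ℝ (Fin n)))
    (hu' : u' ∈ Subgroup.closure {g | ∃ j, 1 ≤ j ∧ j ≤ n ∧ j ≠ 1 ∧ j ≠ i ∧ g = sC n j})
    (hneg' : ∀ j, 1 ≤ j → j ≤ n → j ≠ 1 → j ≠ i → IsNegC n (u' (alphaC n j))) :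
    IsNegC n ((u' * u * vC n)⁻¹ (alphaC n i)) ∧
    ∀ j, 1 ≤ j → j ≤ n → j ≠ i → IsPosC n ((u' * u * vC n)⁻¹ (alphaC n j)) := by
  have hin : i < n := by omega
  have hu0 : IsBlock n 1 u := by
    refine IsBlock.of_mem_closure le_rfl (by omega) ?_
    convert hu using 6
    tauto
  have hu1 := hu0.one
  have hu2 := (longest_apply le_rfl (by omega) hu0 fun j a b c _ => hneg j a b c).2
  have hb' := IsBlock.of_mem_closure hi1 hin hu'
  obtain ⟨hm, ht⟩ := longest_apply hi1 hin hb' hneg'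
  have hv : IsLinearMap ℝ (vC n) := list_prod_linear n n
  set w := u' * u * vC n with hw
  have wl : IsLinearMap ℝ w :=
    ⟨fun x y => by simp [hw, hv.map_add, hu0.lin.map_add, hb'.lin.map_add],
      fun c x => by simp [hw, hv.map_smul, hu0.lin.map_smul, hb'.lin.map_smul]⟩
  have wn : w (E n n) = -E n 1 := by
    simp only [hw, Equiv.Perm.coe_mul, Function.comp_apply]
    rw [vC_apply n n (by omega) (by omega) le_rfl, if_pos rfl, hu0.lin.map_neg, hu1,
      hb'.lin.map_neg, hb'.one]
  have w1 : ∀ k, 1 ≤ k → k < i → w (E n k) = -E n (i + 1 - k) := by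
    intro k hk1 hk
    simp only [hw, Equiv.Perm.coe_mul, Function.comp_apply]
    rw [vC_apply n k (by omega) hk1 (by omega), if_neg (by omega), hu2 _ (by omega) (by omega),
      hb'.lin.map_neg, hm _ (by omega) (by omega), show i + 2 - (k + 1) = i + 1 - k by omega]
  have w2 : ∀ k, i ≤ k → k < n → w (E n k) = E n (k + 1) := by
    intro k hk1 hk
    simp only [hw, Equiv.Perm.coe_mul, Function.comp_apply]
    rw [vC_apply n k (by omega) (by omega) (by omega), if_neg (by omega),
      hu2 _ (by omega) (by omega), hb'.lin.map_neg, ht _ (by omega) (by omega), neg_neg]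
  have winv : ∀ x y, w y = x → w⁻¹ x = y := fun x y h => by
    rw [Equiv.Perm.inv_eq_iff_eq, h]
  clear_value w
  constructor
  · rw [IsNegC]
    rcases hi1.eq_or_lt with rfl | h
    · rw [winv _ (-(E n 1 + E n n)) ?_, neg_neg]
      · exact isPosC_add n 1 n le_rfl (by omega) le_rfl
      · rw [wl.map_neg, wl.map_add, w2 1 le_rfl hin, wn, alphaC, if_neg (by omega)]
        abel
    · rw [winv _ (-(E n 1 + E n i)) ?_, neg_neg]
      · exact isPosC_add n 1 i le_rfl h hin.le
      · rw [wl.map_neg, wl.map_add, w1 1 le_rfl h, w2 i le_rfl hin, alphaC, if_neg (by omega),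
          show i + 1 - 1 = i by omega]
        abel
  · intro j hj1 hj hji
    rcases Nat.lt_or_gt_of_ne hji with h | h
    · rcases hj1.eq_or_lt with rfl | hj2
      · rw [winv _ (E n (i - 1) - E n n) ?_]
        · exact isPosC_sub n _ n (by omega) (by omega) le_rfl
        · rw [wl.map_sub, w1 _ (by omega) (by omega), wn, alphaC, if_neg (by omega),
            show i + 1 - (i - 1) = 1 + 1 by omega]
          abel
      · rw [winv _ (E n (i - j) - E n (i + 1 - j)) ?_]
        · exact isPosC_sub n _ _ (by omega) (by omega) (by omega)
        · rw [wl.map_sub, w1 _ (by omega) (by omega), w1 _ (by omega) (by omega), alphaC,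
            if_neg (by omega), show i + 1 - (i - j) = j + 1 by omega,
            show i + 1 - (i + 1 - j) = j by omega]
          abel
    · rcases hj.eq_or_lt with rfl | hjn
      · rw [winv _ ((2 : ℝ) • E j (j - 1)) ?_]
        · exact isPosC_two j _ (by omega) (by omega)
        · rw [wl.map_smul, w2 _ (by omega) (by omega), alphaC, if_pos rfl,
            show j - 1 + 1 = j by omega]
      · rw [winv _ (E n (j - 1) - E n j) ?_]
        · exact isPosC_sub n _ _ (by omega) (by omega) hj
        · rw [wl.map_sub, w2 _ (by omega) (by omega), w2 _ (by omega) hjn, alphaC,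
            if_neg (by omega), show j - 1 + 1 = j by omega]
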